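/- Let 𝚫 ∈ Ã be a gentle quiver without branch arrows and without branch triangles. Then for each triangle 𝒪 in 𝚫 there exists a unique arrow γ_𝒪 ∈ 𝒪 such that the quiver Δ ∖ {γ_𝒪} (same vertices, arrows Δ₁ ∖ {γ_𝒪}) has no branch arrows. -/

import Mathlib

/-! Common formalization infrastructure for gentle quivers (Bobinski–Buan,
    "Derived equivalence classification of gentle cluster tilted algebras"). -/

/-- A (finite) quiver with (length-two, monomial) relations.  Vertices and
arrows are natural numbers; `V` and `A` are the finite sets of vertices and
arrows, `src`/`tgt` give the start and terminus of each arrow, and `rel` is the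
set of relations, a relation `(a, b)` standing for the length-two path
`a·b` (so `src a = tgt b`). -/
structure QuivRel where
  V : Finset ℕ
  A : Finset ℕ
  src : ℕ → ℕ
  tgt : ℕ → ℕ
  rel : Finset (ℕ × ℕ)

namespace GentleQuiv

/-- Two vertices are adjacent if some arrow joins them (in either direction). -/
def Adj (Q : QuivRel) (x y : ℕ) : Prop :=
  ∃ a ∈ Q.A, (Q.src a = x ∧ Q.tgt a = y) ∨ (Q.src a = y ∧ Q.tgt a = x)

/-- A quiver is connected if any two of its vertices are joined by a walk. -/
def Connected (Q : QuivRel) : Prop :=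
  ∀ x ∈ Q.V, ∀ y ∈ Q.V, Relation.ReflTransGen (Adj Q) x y

/-- `l = [α₁, …, αₙ]` is a (nonempty) path in the quiver: consecutive arrows
compose, i.e. `s αᵢ = t αᵢ₊₁`. -/
def IsPathList (Q : QuivRel) (l : List ℕ) : Prop :=
  l ≠ [] ∧ (∀ a ∈ l, a ∈ Q.A) ∧ l.Chain' (fun a b => Q.src a = Q.tgt b)

/-- The path `l` contains a subpath (two consecutive arrows) lying in `R`. -/
def HasRelSubpath (Q : QuivRel) (l : List ℕ) : Prop :=
  ∃ a b, (a, b) ∈ Q.rel ∧ [a, b] <:+: l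

/-- Gentle quiver: connected, relations are composable pairs of arrows, at most
two arrows in/out of every vertex, the usual gentleness conditions on
relations, and a global bound forcing finite dimensionality. -/
def IsGentle (Q : QuivRel) : Prop :=
  Q.V.Nonempty ∧
  (∀ a ∈ Q.A, Q.src a ∈ Q.V ∧ Q.tgt a ∈ Q.V) ∧
  Connected Q ∧
  (∀ ρ ∈ Q.rel, ρ.1 ∈ Q.A ∧ ρ.2 ∈ Q.A ∧ Q.src ρ.1 = Q.tgt ρ.2) ∧
  (∀ x, (Q.A.filter fun a => Q.src a = x).card ≤ 2) ∧
  (∀ x, (Q.A.filter fun a => Q.tgt a = x).card ≤ 2) ∧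
  (∀ a ∈ Q.A, (Q.A.filter fun b => Q.src b = Q.tgt a ∧ (b, a) ∉ Q.rel).card ≤ 1) ∧
  (∀ a ∈ Q.A, (Q.A.filter fun c => Q.tgt c = Q.src a ∧ (a, c) ∉ Q.rel).card ≤ 1) ∧
  (∀ a ∈ Q.A, (Q.A.filter fun b => (b, a) ∈ Q.rel).card ≤ 1) ∧
  (∀ a ∈ Q.A, (Q.A.filter fun c => (a, c) ∈ Q.rel).card ≤ 1) ∧
  (∃ n : ℕ, ∀ l : List ℕ, IsPathList Q l → l.length = n → HasRelSubpath Q l)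

/-- A choice of functions `σ, τ : Δ₁ → {±1}` as in Avella-Alaminos–Geiss. -/
structure SigmaTau (Q : QuivRel) where
  σ : ℕ → ℤ
  τ : ℕ → ℤ
  σ_pm : ∀ a ∈ Q.A, σ a = 1 ∨ σ a = -1
  τ_pm : ∀ a ∈ Q.A, τ a = 1 ∨ τ a = -1
  σ_src : ∀ a ∈ Q.A, ∀ b ∈ Q.A, a ≠ b → Q.src a = Q.src b → σ a = -σ b
  τ_tgt : ∀ a ∈ Q.A, ∀ b ∈ Q.A, a ≠ b → Q.tgt a = Q.tgt b → τ a = -τ b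
  rel_iff : ∀ a ∈ Q.A, ∀ b ∈ Q.A, Q.src a = Q.tgt b → ((a, b) ∈ Q.rel ↔ σ a = τ b)

/-- A thread: either a trivial path/antipath `1_{x,ε}` at a vertex `x` with a
sign `ε`, or a sequence of arrows of positive length. -/
inductive Thread where
  | triv (x : ℕ) (ε : ℤ) : Thread
  | arrows (l : List ℕ) : Thread
deriving DecidableEq

/-- Source of a thread. -/
def Thread.source (Q : QuivRel) : Thread → ℕ
  | .triv x _ => x
  | .arrows l => Q.src l.getLast!

/-- Target of a thread. -/
def Thread.target (Q : QuivRel) : Thread → ℕ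
  | .triv x _ => x
  | .arrows l => Q.tgt l.head!

/-- `σω` (for paths and antipaths alike; `σ 1_{x,ε} = ε = σ 1'_{x,ε}`). -/
def Thread.sigma {Q : QuivRel} (st : SigmaTau Q) : Thread → ℤ
  | .triv _ ε => ε
  | .arrows l => st.σ l.getLast!

/-- `τω` when `ω` is regarded as a path (`τ 1_{x,ε} = -ε`). -/
def Thread.tauPath {Q : QuivRel} (st : SigmaTau Q) : Thread → ℤ
  | .triv _ ε => -ε
  | .arrows l => st.τ l.head!

/-- `τω` when `ω` is regarded as an antipath (`τ 1'_{x,ε} = ε`). -/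
def Thread.tauAnti {Q : QuivRel} (st : SigmaTau Q) : Thread → ℤ
  | .triv _ ε => ε
  | .arrows l => st.τ l.head!

/-- Length of a thread. -/
def Thread.len : Thread → ℕ
  | .triv _ _ => 0
  | .arrows l => l.length

/-- A path in `𝚫` of positive length (no two consecutive arrows in `R`). -/
def IsPermList (Q : QuivRel) (l : List ℕ) : Prop :=
  IsPathList Q l ∧ l.Chain' (fun a b => (a, b) ∉ Q.rel)

/-- An antipath in `𝚫` of positive length (all consecutive pairs in `R`). -/
def IsAntiList (Q : QuivRel) (l : List ℕ) : Prop :=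
  l ≠ [] ∧ (∀ a ∈ l, a ∈ Q.A) ∧ l.Chain' (fun a b => (a, b) ∈ Q.rel)

/-- A thread is a path in `𝚫` (including trivial ones). -/
def IsPathThread (Q : QuivRel) : Thread → Prop
  | .triv x ε => x ∈ Q.V ∧ (ε = 1 ∨ ε = -1)
  | .arrows l => IsPermList Q l

/-- A thread is an antipath in `𝚫` (including trivial ones). -/
def IsAntiThread (Q : QuivRel) : Thread → Prop
  | .triv x ε => x ∈ Q.V ∧ (ε = 1 ∨ ε = -1)
  | .arrows l => IsAntiList Q l

/-- `w ∈ ℳ`: `w` is a maximal path of `𝚫`. -/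
def InM (Q : QuivRel) (st : SigmaTau Q) (w : Thread) : Prop :=
  IsPathThread Q w ∧
  (¬ ∃ a ∈ Q.A, Q.src a = w.target Q ∧ st.σ a = -(w.tauPath st)) ∧
  (¬ ∃ b ∈ Q.A, Q.tgt b = w.source Q ∧ st.τ b = -(w.sigma st))

/-- `w ∈ 𝒩`: `w` is a maximal antipath of `𝚫`. -/
def InN (Q : QuivRel) (st : SigmaTau Q) (w : Thread) : Prop :=
  IsAntiThread Q w ∧
  (¬ ∃ a ∈ Q.A, Q.src a = w.target Q ∧ st.σ a = w.tauAnti st) ∧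
  (¬ ∃ b ∈ Q.A, Q.tgt b = w.source Q ∧ st.τ b = w.sigma st)

/-- The graph of the bijection `Φ = φ ∘ ψ : 𝒩 → 𝒩`:  `PhiRel Q st w w'` holds
iff `w, w' ∈ 𝒩` and the maximal path `ψ w` (with `s(ψw) = sw`, `σ(ψw) = -σw`)
satisfies `t w' = t (ψ w)` and `τ w' = -τ(ψ w)`, i.e. `w' = φ (ψ w) = Φ w`. -/
def PhiRel (Q : QuivRel) (st : SigmaTau Q) (w w' : Thread) : Prop :=
  InN Q st w ∧ InN Q st w' ∧
  ∃ m : Thread, InM Q st m ∧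
    m.source Q = w.source Q ∧ m.sigma st = -(w.sigma st) ∧
    w'.target Q = m.target Q ∧ w'.tauAnti st = -(m.tauPath st)

/-- `O` is an orbit of the `ℤ`-action on `𝒩` induced by `Φ`. -/
def NOrbit (Q : QuivRel) (st : SigmaTau Q) (O : Set Thread) : Prop :=
  ∃ w, InN Q st w ∧ O = {w' | Relation.EqvGen (PhiRel Q st) w w'}

/-- `p(𝒪) = |𝒪|` for an orbit `𝒪 ∈ 𝒩/ℤ`. -/
noncomputable def pN (O : Set Thread) : ℕ := O.ncard

/-- `q(𝒪) = Σ_{ω ∈ 𝒪} ℓ(ω)` for an orbit `𝒪 ∈ 𝒩/ℤ`. -/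
noncomputable def qN (O : Set Thread) : ℕ := ∑ᶠ w ∈ O, Thread.len w

/-- `a ∈ 𝒞`: the arrow `a` occurs in no maximal antipath. -/
def InC (Q : QuivRel) (st : SigmaTau Q) (a : ℕ) : Prop :=
  a ∈ Q.A ∧ ¬ ∃ l : List ℕ, InN Q st (.arrows l) ∧ a ∈ l

/-- The graph of the bijection `Ψ : 𝒞 → 𝒞`. -/
def PsiRel (Q : QuivRel) (st : SigmaTau Q) (a b : ℕ) : Prop :=
  InC Q st a ∧ InC Q st b ∧ Q.tgt b = Q.src a ∧ st.τ b = st.σ a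

/-- `O` is an orbit of the `ℤ`-action on `𝒞` induced by `Ψ`. -/
def COrbit (Q : QuivRel) (st : SigmaTau Q) (O : Set ℕ) : Prop :=
  ∃ a, InC Q st a ∧ O = {b | Relation.EqvGen (PsiRel Q st) a b}

/-- The Avella-Alaminos–Geiss invariant `f_𝚫 : ℕ² → ℕ`:  `f_𝚫 (p,q)` counts the
orbits `𝒪 ∈ 𝒩/ℤ ⊔ 𝒞/ℤ` with `p(𝒪) = p` and `q(𝒪) = q`. -/
noncomputable def fInv (Q : QuivRel) (st : SigmaTau Q) : ℕ × ℕ → ℕ := fun pq =>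
  {O : Set Thread | NOrbit Q st O ∧ pN O = pq.1 ∧ qN O = pq.2}.ncard +
  {O : Set ℕ | COrbit Q st O ∧ pq.1 = 0 ∧ O.ncard = pq.2}.ncard

/-- `[p, q] : ℕ² → ℕ`, the characteristic function of `{(p, q)}`. -/
def charFn (p q : ℕ) : ℕ × ℕ → ℕ := fun pq => if pq = (p, q) then 1 else 0

/-- Tree type: `|Δ₀| = |Δ₁| + 1`. -/
def TreeType (Q : QuivRel) : Prop := Q.V.card = Q.A.card + 1

/-- Removing a set of arrows (keeping all vertices); relations containing a
removed arrow are discarded. -/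
def deleteArrows (Q : QuivRel) (S : Finset ℕ) : QuivRel where
  V := Q.V
  A := Q.A \ S
  src := Q.src
  tgt := Q.tgt
  rel := Q.rel.filter fun ρ => ρ.1 ∉ S ∧ ρ.2 ∉ S

/-- Branch arrow: removing it disconnects the quiver. -/
def BranchArrow (Q : QuivRel) (a : ℕ) : Prop :=
  a ∈ Q.A ∧ ¬ Connected (deleteArrows Q {a})

/-- Cycle arrow: removing it leaves the quiver connected. -/
def CycleArrow (Q : QuivRel) (a : ℕ) : Prop :=
  a ∈ Q.A ∧ Connected (deleteArrows Q {a})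

/-- Branch relation: a relation one of whose arrows is a branch arrow. -/
def BranchRel (Q : QuivRel) (ρ : ℕ × ℕ) : Prop :=
  ρ ∈ Q.rel ∧ (BranchArrow Q ρ.1 ∨ BranchArrow Q ρ.2)

/-- A relation `ρ = (α, β)` is isolated if the antipath `(α, β)` is a maximal
antipath, i.e. `ρ ∈ 𝒩`. -/
def Isolated (Q : QuivRel) (st : SigmaTau Q) (ρ : ℕ × ℕ) : Prop :=
  ρ ∈ Q.rel ∧ InN Q st (.arrows [ρ.1, ρ.2])

/-- `Q'` is obtained from `Q` by completing the relations from `R₀`, the new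
arrow attached to `ρ ∈ R₀` being `γ ρ`. -/
structure IsCompletion (Q : QuivRel) (R0 : Finset (ℕ × ℕ)) (γ : ℕ × ℕ → ℕ)
    (Q' : QuivRel) : Prop where
  subset : R0 ⊆ Q.rel
  fresh : ∀ ρ ∈ R0, γ ρ ∉ Q.A
  inj : ∀ ρ ∈ R0, ∀ ρ' ∈ R0, γ ρ = γ ρ' → ρ = ρ'
  V_eq : Q'.V = Q.V
  A_eq : Q'.A = Q.A ∪ R0.image γ
  src_old : ∀ a ∈ Q.A, Q'.src a = Q.src a
  tgt_old : ∀ a ∈ Q.A, Q'.tgt a = Q.tgt a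
  src_new : ∀ ρ ∈ R0, Q'.src (γ ρ) = Q.tgt ρ.1
  tgt_new : ∀ ρ ∈ R0, Q'.tgt (γ ρ) = Q.src ρ.2
  rel_eq : Q'.rel = Q.rel ∪ R0.image (fun ρ => (γ ρ, ρ.1)) ∪
      R0.image (fun ρ => (ρ.2, γ ρ))

/-- A 3-cycle: three pairwise distinct arrows forming an oriented cycle. -/
def Is3Cycle (Q : QuivRel) (a0 a1 a2 : ℕ) : Prop :=
  a0 ∈ Q.A ∧ a1 ∈ Q.A ∧ a2 ∈ Q.A ∧ a0 ≠ a1 ∧ a1 ≠ a2 ∧ a0 ≠ a2 ∧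
  Q.src a0 = Q.tgt a1 ∧ Q.src a1 = Q.tgt a2 ∧ Q.src a2 = Q.tgt a0

/-- A triangle: a 3-cycle all of whose three compositions are relations. -/
def IsTriangleTriple (Q : QuivRel) (a0 a1 a2 : ℕ) : Prop :=
  Is3Cycle Q a0 a1 a2 ∧ (a0, a1) ∈ Q.rel ∧ (a1, a2) ∈ Q.rel ∧ (a2, a0) ∈ Q.rel

/-- The (unordered) set of arrows of a triangle. -/
def TriangleSet (Q : QuivRel) (O : Finset ℕ) : Prop :=
  ∃ a0 a1 a2, O = {a0, a1, a2} ∧ IsTriangleTriple Q a0 a1 a2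

/-- Branch triangle: removing any two of its arrows disconnects the quiver. -/
def BranchTriangle (Q : QuivRel) (O : Finset ℕ) : Prop :=
  TriangleSet Q O ∧ ∀ S ⊆ O, S.card = 2 → ¬ Connected (deleteArrows Q S)

/-- Free relation: a relation neither of whose arrows lies in `𝒞`. -/
def FreeRel (Q : QuivRel) (st : SigmaTau Q) (ρ : ℕ × ℕ) : Prop :=
  ρ ∈ Q.rel ∧ ¬ InC Q st ρ.1 ∧ ¬ InC Q st ρ.2

/-- The class `𝒜`: gentle quivers with `f_𝚫 = m·[0,3] + [p+m+2, p]`. -/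
def ClassA (Q : QuivRel) (st : SigmaTau Q) : Prop :=
  IsGentle Q ∧ ∃ m p : ℕ, ∀ x, fInv Q st x = m * charFn 0 3 x + charFn (p + m + 2) p x

/-- The class `Ã`: gentle quivers with
`f_𝚫 = (m₁+m₂)·[0,3] + [p+m₁, p] + [q+m₂, q]`, `p+m₁ > 0`, `q+m₂ > 0`. -/
def ClassAtilde (Q : QuivRel) (st : SigmaTau Q) : Prop :=
  IsGentle Q ∧ ∃ m1 m2 p q : ℕ, 0 < p + m1 ∧ 0 < q + m2 ∧
    ∀ x, fInv Q st x =
      (m1 + m2) * charFn 0 3 x + charFn (p + m1) p x + charFn (q + m2) q x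

/-- Isomorphism of quivers with relations. -/
def IsoQR (Q Q' : QuivRel) : Prop :=
  ∃ fV fA : ℕ → ℕ,
    Set.BijOn fV ↑Q.V ↑Q'.V ∧ Set.BijOn fA ↑Q.A ↑Q'.A ∧
    (∀ a ∈ Q.A, Q'.src (fA a) = fV (Q.src a) ∧ Q'.tgt (fA a) = fV (Q.tgt a)) ∧
    (∀ a ∈ Q.A, ∀ b ∈ Q.A, ((a, b) ∈ Q.rel ↔ (fA a, fA b) ∈ Q'.rel))

/-- The quiver has no loops. -/
def NoLoops (Q : QuivRel) : Prop := ∀ a ∈ Q.A, Q.src a ≠ Q.tgt a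

/-- The reflection at `x` is defined: every arrow starting at `x` admits a
(necessarily unique) companion arrow ending at `x` not bound by a relation. -/
def CanReflect (Q : QuivRel) (x : ℕ) : Prop :=
  x ∈ Q.V ∧ ∀ a ∈ Q.A, Q.src a = x → ∃ b ∈ Q.A, Q.tgt b = x ∧ (a, b) ∉ Q.rel

/-- `Q'` is the reflection of the gentle loop-free quiver `Q` at the vertex
`x`, following Brenner–Butler tilting. -/
def IsReflection (Q : QuivRel) (x : ℕ) (Q' : QuivRel) : Prop :=
  IsGentle Q ∧ NoLoops Q ∧ CanReflect Q x ∧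
  Q'.V = Q.V ∧ Q'.A = Q.A ∧
  (∀ a ∈ Q.A, Q.tgt a = x → Q'.src a = x ∧ Q'.tgt a = Q.src a) ∧
  (∀ a ∈ Q.A, Q.src a = x →
    ∀ b ∈ Q.A, Q.tgt b = x → (a, b) ∉ Q.rel → Q'.src a = Q.src b) ∧
  (∀ a ∈ Q.A, Q.tgt a ≠ x → Q.src a ≠ x → Q'.src a = Q.src a) ∧
  (∀ a ∈ Q.A, Q.tgt a ≠ x →
    ((∃ b ∈ Q.A, Q.tgt b = x ∧ Q.src b = Q.tgt a ∧ (b, a) ∈ Q.rel) → Q'.tgt a = x) ∧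
    ((¬ ∃ b ∈ Q.A, Q.tgt b = x ∧ Q.src b = Q.tgt a ∧ (b, a) ∈ Q.rel) →
      Q'.tgt a = Q.tgt a)) ∧
  (∀ a b : ℕ, (a, b) ∈ Q'.rel ↔
    (((a, b) ∈ Q.rel ∧ Q.tgt a ≠ x ∧ Q.src a ≠ x) ∨
     (a ∈ Q.A ∧ b ∈ Q.A ∧ Q.src a = x ∧ Q.tgt b = x ∧ (a, b) ∉ Q.rel) ∨
     (a ∈ Q.A ∧ b ∈ Q.A ∧ Q.tgt a = x ∧
       ∃ c ∈ Q.A, c ≠ a ∧ Q.tgt c = x ∧ Q.src c = Q.tgt b ∧ (c, b) ∈ Q.rel)))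

/-- The opposite quiver with relations. -/
def opQR (Q : QuivRel) : QuivRel where
  V := Q.V
  A := Q.A
  src := Q.tgt
  tgt := Q.src
  rel := Q.rel.image fun ρ => (ρ.2, ρ.1)

/-- Coreflection: the dual of reflection. -/
def IsCoreflection (Q : QuivRel) (x : ℕ) (Q' : QuivRel) : Prop :=
  IsReflection (opQR Q) x (opQR Q')

/-- One step of reflection equivalence: a reflection, a coreflection, or an
isomorphism of quivers with relations. -/
def RefStep (Q Q' : QuivRel) : Prop :=
  (∃ x, IsReflection Q x Q') ∨ (∃ x, IsCoreflection Q x Q') ∨ IsoQR Q Q'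

/-- Reflection equivalence: a finite sequence of reflections/coreflections,
up to isomorphism of quivers with relations. -/
def RefEquiv : QuivRel → QuivRel → Prop := Relation.ReflTransGen RefStep

/-- A cyclic orientation of a `1`-cycle quiver without branch arrows (i.e. a
cycle): enumerations of the vertices and arrows by `ZMod n` such that the
`i`-th arrow joins the `i`-th and `(i+1)`-st vertices. -/
structure CyclicOrientation (Q : QuivRel) (n : ℕ) where
  ev : ZMod n → ℕ
  ea : ZMod n → ℕ
  ev_mem : ∀ i, ev i ∈ Q.V
  ea_mem : ∀ i, ea i ∈ Q.A
  ev_inj : Function.Injective ev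
  ea_inj : Function.Injective ea
  ev_surj : ∀ v ∈ Q.V, ∃ i, ev i = v
  ea_surj : ∀ a ∈ Q.A, ∃ i, ea i = a
  compat : ∀ i : ZMod n,
    (Q.src (ea i) = ev i ∧ Q.tgt (ea i) = ev (i + 1)) ∨
    (Q.src (ea i) = ev (i + 1) ∧ Q.tgt (ea i) = ev i)

/-- Clockwise arrow with respect to a cyclic orientation. -/
def Clockwise (Q : QuivRel) {n : ℕ} (co : CyclicOrientation Q n) (a : ℕ) : Prop :=
  a ∈ Q.A ∧ ∃ i : ZMod n, co.ea i = a ∧ Q.src a = co.ev i ∧ Q.tgt a = co.ev (i + 1)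

/-- Anticlockwise arrow with respect to a cyclic orientation. -/
def Anticlockwise (Q : QuivRel) {n : ℕ} (co : CyclicOrientation Q n) (a : ℕ) : Prop :=
  a ∈ Q.A ∧ ∃ i : ZMod n, co.ea i = a ∧ Q.src a = co.ev (i + 1) ∧ Q.tgt a = co.ev i

end GentleQuiv

namespace GentleQuiv

/-- Walk-connectedness of two vertices using only arrows from `E`. -/
def Wk (Q : QuivRel) (E : Finset ℕ) : ℕ → ℕ → Prop :=
  Relation.ReflTransGen fun x y =>
    ∃ a ∈ E, (Q.src a = x ∧ Q.tgt a = y) ∨ (Q.src a = y ∧ Q.tgt a = x)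

/-- Connectedness of the subquiver with arrow set `E`. -/
def Cn (Q : QuivRel) (E : Finset ℕ) : Prop := ∀ x ∈ Q.V, ∀ y ∈ Q.V, Wk Q E x y

theorem Wk.symm {Q : QuivRel} {E : Finset ℕ} {x y : ℕ} (h : Wk Q E x y) : Wk Q E y x := by
  induction h with
  | refl => exact Relation.ReflTransGen.refl
  | tail _ h ih =>
    obtain ⟨a, ha, h⟩ := h
    exact Relation.ReflTransGen.head ⟨a, ha, h.symm⟩ ih

theorem Wk.refl {Q : QuivRel} {E : Finset ℕ} (x : ℕ) : Wk Q E x x := Relation.ReflTransGen.refl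

theorem Wk.trans {Q : QuivRel} {E : Finset ℕ} {x y z : ℕ} (h : Wk Q E x y) (h' : Wk Q E y z) :
    Wk Q E x z := Relation.ReflTransGen.trans h h'

theorem Wk.arrow {Q : QuivRel} {E : Finset ℕ} {a : ℕ} (h : a ∈ E) :
    Wk Q E (Q.src a) (Q.tgt a) :=
  Relation.ReflTransGen.single ⟨a, h, Or.inl ⟨rfl, rfl⟩⟩

theorem Wk.lift {Q : QuivRel} {E E' : Finset ℕ} (H : ∀ a ∈ E, Wk Q E' (Q.src a) (Q.tgt a))
    {x y : ℕ} (h : Wk Q E x y) : Wk Q E' x y := by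
  induction h with
  | refl => exact Wk.refl _
  | tail _ h ih =>
    obtain ⟨a, ha, ⟨rfl, rfl⟩ | ⟨rfl, rfl⟩⟩ := h
    · exact ih.trans (H a ha)
    · exact ih.trans (H a ha).symm

theorem Wk.mono {Q : QuivRel} {E E' : Finset ℕ} (H : E ⊆ E') {x y : ℕ} (h : Wk Q E x y) :
    Wk Q E' x y := Wk.lift (fun _ ha => Wk.arrow (H ha)) h

theorem Wk.insert {Q : QuivRel} {E E' : Finset ℕ} {e : ℕ} (H : ∀ a ∈ E', a = e ∨ a ∈ E)
    {x y : ℕ} (h : Wk Q E' x y) :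
    Wk Q E x y ∨ (Wk Q E x (Q.src e) ∧ Wk Q E (Q.tgt e) y) ∨
      (Wk Q E x (Q.tgt e) ∧ Wk Q E (Q.src e) y) := by
  induction h with
  | refl => exact Or.inl (Wk.refl _)
  | tail _ h ih =>
    obtain ⟨a, ha, h⟩ := h
    rcases H a ha with rfl | hE
    · rcases h with ⟨rfl, rfl⟩ | ⟨rfl, rfl⟩
      · rcases ih with ih | ⟨ih, _⟩ | ⟨ih, _⟩
        · exact Or.inr (Or.inl ⟨ih, Wk.refl _⟩)
        · exact Or.inr (Or.inl ⟨ih, Wk.refl _⟩)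
        · exact Or.inl ih
      · rcases ih with ih | ⟨ih, _⟩ | ⟨ih, _⟩
        · exact Or.inr (Or.inr ⟨ih, Wk.refl _⟩)
        · exact Or.inl ih
        · exact Or.inr (Or.inr ⟨ih, Wk.refl _⟩)
    · have key := Wk.arrow (Q := Q) hE
      rcases h with ⟨rfl, rfl⟩ | ⟨rfl, rfl⟩
      · rcases ih with ih | ⟨ih, h2⟩ | ⟨ih, h2⟩
        · exact Or.inl (ih.trans key)
        · exact Or.inr (Or.inl ⟨ih, h2.trans key⟩)
        · exact Or.inr (Or.inr ⟨ih, h2.trans key⟩)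
      · rcases ih with ih | ⟨ih, h2⟩ | ⟨ih, h2⟩
        · exact Or.inl (ih.trans key.symm)
        · exact Or.inr (Or.inl ⟨ih, h2.trans key.symm⟩)
        · exact Or.inr (Or.inr ⟨ih, h2.trans key.symm⟩)

/-- A connected quiver has at least `|V| - 1` arrows. -/
theorem Cn.card_le {Q : QuivRel} {E : Finset ℕ} (hne : Q.V.Nonempty)
    (hV : ∀ a ∈ E, Q.src a ∈ Q.V ∧ Q.tgt a ∈ Q.V) (h : Cn Q E) :
    Q.V.card ≤ E.card + 1 := by
  classical
  obtain ⟨v0, hv0⟩ := hne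
  let G : SimpleGraph Q.V := SimpleGraph.fromRel fun x y =>
    ∃ a ∈ E, Q.src a = x ∧ Q.tgt a = y
  have hreach : ∀ x y : ℕ, Wk Q E x y → ∀ (hx : x ∈ Q.V) (hy : y ∈ Q.V),
      G.Reachable ⟨x, hx⟩ ⟨y, hy⟩ := by
    intro x y hxy hx
    induction hxy with
    | refl => intro _; exact SimpleGraph.Reachable.refl _
    | @tail b c _ hbc ih =>
      intro hc
      obtain ⟨a, ha, hh⟩ := hbc
      have hb : b ∈ Q.V := by
        rcases hh with ⟨h1, _⟩ | ⟨_, h1⟩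
        · exact h1 ▸ (hV a ha).1
        · exact h1 ▸ (hV a ha).2
      refine (ih hb).trans ?_
      by_cases hbc : b = c
      · subst hbc; exact SimpleGraph.Reachable.refl _
      · refine SimpleGraph.Adj.reachable ?_
        rw [SimpleGraph.fromRel_adj]
        refine ⟨by simpa using hbc, ?_⟩
        rcases hh with hh | hh
        · exact Or.inl ⟨a, ha, hh⟩
        · exact Or.inr ⟨a, ha, hh⟩
  have hG : G.Connected := by
    have : Nonempty Q.V := ⟨⟨v0, hv0⟩⟩
    exact ⟨fun x y => hreach _ _ (h x x.2 y y.2) x.2 y.2⟩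
  have h1 := hG.card_vert_le_card_edgeSet_add_one
  have h2 : Nat.card G.edgeSet ≤ E.card := by
    let f : ℕ → Sym2 Q.V := fun a =>
      if h : Q.src a ∈ Q.V ∧ Q.tgt a ∈ Q.V then s(⟨_, h.1⟩, ⟨_, h.2⟩) else s(⟨v0, hv0⟩, ⟨v0, hv0⟩)
    have hsub : G.edgeSet ⊆ ↑(E.image f) := by
      intro e
      induction e using Sym2.ind with
      | _ x y =>
        intro hxy
        rw [SimpleGraph.mem_edgeSet, SimpleGraph.fromRel_adj] at hxy
        rw [Finset.mem_coe, Finset.mem_image]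
        rcases hxy.2 with ⟨a, ha, h1, h2⟩ | ⟨a, ha, h1, h2⟩
        · refine ⟨a, ha, ?_⟩
          simp only [f, dif_pos (hV a ha)]
          congr 2
        · refine ⟨a, ha, ?_⟩
          simp only [f, dif_pos (hV a ha)]
          rw [Sym2.eq_swap]
          congr 2
    calc Nat.card G.edgeSet = G.edgeSet.ncard := rfl
      _ ≤ (↑(E.image f) : Set (Sym2 Q.V)).ncard := Set.ncard_le_ncard hsub (Finset.finite_toSet _)
      _ = (E.image f).card := Set.ncard_coe_finset _
      _ ≤ E.card := Finset.card_image_le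
  have h3 : Nat.card Q.V = Q.V.card := by simp
  omega

/-- The purely graph-theoretic core, with a distinguished arrow. -/
theorem core_aux {Q : QuivRel} {a0 a1 a2 : ℕ} (h : IsTriangleTriple Q a0 a1 a2)
    (hba : ∀ a ∈ Q.A, Cn Q (Q.A \ {a}))
    (hV : ∀ a ∈ Q.A, Q.src a ∈ Q.V ∧ Q.tgt a ∈ Q.V)
    (h02 : Wk Q (Q.A \ {a0, a1, a2}) (Q.src a0) (Q.tgt a0))
    (h01 : ¬ Wk Q (Q.A \ {a0, a1, a2}) (Q.src a1) (Q.tgt a1))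
    (h12 : ¬ Wk Q (Q.A \ {a0, a1, a2}) (Q.src a2) (Q.tgt a2)) :
    ∃! g : ℕ, g ∈ ({a0, a1, a2} : Finset ℕ) ∧
      ∀ a : ℕ, ¬ BranchArrow (deleteArrows Q {g}) a := by
  obtain ⟨⟨m0, m1, m2, n01, n12, n02, e0, e1, e2⟩, -⟩ := h
  refine ⟨a0, ⟨by simp, ?_⟩, ?_⟩
  · rintro a ⟨haA, hcon⟩
    apply hcon
    change Cn Q ((Q.A \ {a0}) \ {a})
    have haA' : a ∈ Q.A ∧ a ≠ a0 := by simpa [deleteArrows] using haA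
    intro x hx y hy
    refine Wk.lift ?_ (hba a haA'.1 x hx y hy)
    intro b hb
    simp only [Finset.mem_sdiff, Finset.mem_singleton] at hb
    by_cases hb0 : b = a0
    · subst hb0
      by_cases hO : a = a1 ∨ a = a2
      · refine h02.mono ?_
        intro c hc
        simp only [Finset.mem_sdiff, Finset.mem_singleton, Finset.mem_insert] at hc ⊢
        rcases hO with rfl | rfl <;> tauto
      · have w1 : Wk Q ((Q.A \ {b}) \ {a}) (Q.src a1) (Q.tgt a1) := Wk.arrow (by
          simp only [Finset.mem_sdiff, Finset.mem_singleton]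
          exact ⟨⟨m1, fun h => n01 h.symm⟩, fun h => hO (Or.inl h.symm)⟩)
        have w2 : Wk Q ((Q.A \ {b}) \ {a}) (Q.src a2) (Q.tgt a2) := Wk.arrow (by
          simp only [Finset.mem_sdiff, Finset.mem_singleton]
          exact ⟨⟨m2, fun h => n02 h.symm⟩, fun h => hO (Or.inr h.symm)⟩)
        rw [e0, ← e2]
        rw [e1] at w1
        exact w1.symm.trans w2.symm
    · exact Wk.arrow (by simp only [Finset.mem_sdiff, Finset.mem_singleton]; tauto)
  · rintro g ⟨hg, hno⟩
    simp only [Finset.mem_insert, Finset.mem_singleton] at hg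
    rcases hg with rfl | rfl | rfl
    · rfl
    · exfalso
      refine hno a2 ⟨by simp [deleteArrows, m2, n12.symm], fun hc => ?_⟩
      have hc' : Cn Q ((Q.A \ {g}) \ {a2}) := hc
      have := (hc' _ (hV g m1).1 _ (hV g m1).2).insert (e := a0) (E := Q.A \ {a0, g, a2})
        (by intro b hb; simp only [Finset.mem_sdiff, Finset.mem_singleton,
              Finset.mem_insert] at hb ⊢; tauto)
      rcases this with h | ⟨h, -⟩ | ⟨h, -⟩
      · exact h01 h
      · exact h01 (e0 ▸ h)
      · rw [← e2, e1] at h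
        exact h12 h.symm
    · exfalso
      refine hno a1 ⟨by simp [deleteArrows, m1, n12], fun hc => ?_⟩
      have hc' : Cn Q ((Q.A \ {g}) \ {a1}) := hc
      have := (hc' _ (hV g m2).1 _ (hV g m2).2).insert (e := a0) (E := Q.A \ {a0, a1, g})
        (by intro b hb; simp only [Finset.mem_sdiff, Finset.mem_singleton,
              Finset.mem_insert] at hb ⊢; tauto)
      rcases this with h | ⟨-, h⟩ | ⟨-, h⟩
      · exact h12 h
      · rw [← e2] at h; exact h12 h
      · rw [e0, ← e1] at h
        exact h01 h.symm

theorem IsTriangleTriple.rot {Q : QuivRel} {a0 a1 a2 : ℕ} (h : IsTriangleTriple Q a0 a1 a2) :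
    IsTriangleTriple Q a1 a2 a0 := by
  obtain ⟨⟨m0, m1, m2, n01, n12, n02, e0, e1, e2⟩, r0, r1, r2⟩ := h
  exact ⟨⟨m1, m2, m0, n12, n02.symm, n01.symm, e1, e2, e0⟩, r1, r2, r0⟩

theorem rot_set (a0 a1 a2 : ℕ) : ({a0, a1, a2} : Finset ℕ) = {a1, a2, a0} := by
  ext; simp; tauto

/-- If all pairs of remaining vertices are separated, removing two arrows disconnects. -/
theorem sep_aux {Q : QuivRel} {a0 a1 a2 : ℕ} (h : IsTriangleTriple Q a0 a1 a2)
    (hV : ∀ a ∈ Q.A, Q.src a ∈ Q.V ∧ Q.tgt a ∈ Q.V)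
    (h02 : ¬ Wk Q (Q.A \ {a0, a1, a2}) (Q.src a0) (Q.tgt a0))
    (h01 : ¬ Wk Q (Q.A \ {a0, a1, a2}) (Q.src a1) (Q.tgt a1))
    (S : Finset ℕ) (h0 : a0 ∈ S) (h1 : a1 ∈ S) (hc : Cn Q (Q.A \ S)) : False := by
  obtain ⟨⟨m0, m1, m2, n01, n12, n02, e0, e1, e2⟩, -⟩ := h
  have := (hc _ (hV a0 m0).1 _ (hV a1 m1).1).insert (e := a2) (E := Q.A \ {a0, a1, a2})
        (by intro b hb; simp only [Finset.mem_sdiff, Finset.mem_singleton,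
              Finset.mem_insert] at hb ⊢
            by_cases b = a2
            · tauto
            · refine Or.inr ⟨hb.1, ?_⟩
              rintro (rfl | rfl | rfl) <;> tauto)
  rcases this with h | ⟨h, -⟩ | ⟨h, -⟩
  · rw [e0] at h; exact h01 h.symm
  · rw [e2] at h; exact h02 h
  · rw [e0, ← e1] at h; exact h01 h.symm

theorem core {Q : QuivRel} {a0 a1 a2 : ℕ} (h : IsTriangleTriple Q a0 a1 a2)
    (hQ : Cn Q Q.A)
    (hba : ∀ a ∈ Q.A, Cn Q (Q.A \ {a}))
    (hV : ∀ a ∈ Q.A, Q.src a ∈ Q.V ∧ Q.tgt a ∈ Q.V)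
    (hno : ¬ Cn Q (Q.A \ {a0, a1, a2}))
    (hS : ∃ S ⊆ ({a0, a1, a2} : Finset ℕ), S.card = 2 ∧ Cn Q (Q.A \ S)) :
    ∃! g : ℕ, g ∈ ({a0, a1, a2} : Finset ℕ) ∧
      ∀ a : ℕ, ¬ BranchArrow (deleteArrows Q {g}) a := by
  have r1 := rot_set a0 a1 a2
  have r2 := r1.trans (rot_set a1 a2 a0)
  obtain ⟨⟨m0, m1, m2, n01, n12, n02, e0, e1, e2⟩, -⟩ := id h
  have hall : ¬ (Wk Q (Q.A \ {a0, a1, a2}) (Q.src a0) (Q.tgt a0) ∧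
      Wk Q (Q.A \ {a0, a1, a2}) (Q.src a1) (Q.tgt a1) ∧
      Wk Q (Q.A \ {a0, a1, a2}) (Q.src a2) (Q.tgt a2)) := by
    rintro ⟨w0, w1, w2⟩
    refine hno fun x hx y hy => Wk.lift ?_ (hQ x hx y hy)
    intro b hb
    by_cases hb' : b ∈ ({a0, a1, a2} : Finset ℕ)
    · simp only [Finset.mem_insert, Finset.mem_singleton] at hb'
      rcases hb' with rfl | rfl | rfl <;> assumption
    · exact Wk.arrow (Finset.mem_sdiff.2 ⟨hb, hb'⟩)
  by_cases w0 : Wk Q (Q.A \ {a0, a1, a2}) (Q.src a0) (Q.tgt a0) <;>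
  by_cases w1 : Wk Q (Q.A \ {a0, a1, a2}) (Q.src a1) (Q.tgt a1) <;>
  by_cases w2 : Wk Q (Q.A \ {a0, a1, a2}) (Q.src a2) (Q.tgt a2)
  · exact absurd ⟨w0, w1, w2⟩ hall
  · refine absurd ⟨w0, w1, ?_⟩ hall
    rw [e2, ← e1]; rw [← e0] at w1
    exact (w1.trans w0).symm
  · refine absurd ⟨w0, ?_, w2⟩ hall
    rw [← e0, e1]; rw [e2] at w2
    exact (w0.trans w2).symm
  · exact core_aux h hba hV w0 w1 w2
  · refine absurd ⟨?_, w1, w2⟩ hall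
    rw [e0, ← e2]; rw [← e1] at w2
    exact (w2.trans w1).symm
  · rw [r1] at w0 w1 w2 ⊢
    exact core_aux h.rot hba hV w1 w2 w0
  · rw [r2] at w0 w1 w2 ⊢
    exact core_aux h.rot.rot hba hV w2 w0 w1
  · exfalso
    obtain ⟨S, hsub, hcard, hc⟩ := hS
    have hpair : (a0 ∈ S ∧ a1 ∈ S) ∨ (a1 ∈ S ∧ a2 ∈ S) ∨ (a2 ∈ S ∧ a0 ∈ S) := by
      by_contra hcon
      have : ∃ c, S ⊆ {c} := by
        by_cases s0 : a0 ∈ S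
        · refine ⟨a0, fun b hb => ?_⟩
          have := hsub hb
          simp only [Finset.mem_insert, Finset.mem_singleton] at this ⊢
          rcases this with rfl | rfl | rfl <;> tauto
        · by_cases s1 : a1 ∈ S
          · refine ⟨a1, fun b hb => ?_⟩
            have := hsub hb
            simp only [Finset.mem_insert, Finset.mem_singleton] at this ⊢
            rcases this with rfl | rfl | rfl <;> tauto
          · refine ⟨a2, fun b hb => ?_⟩
            have := hsub hb
            simp only [Finset.mem_insert, Finset.mem_singleton] at this ⊢
            rcases this with rfl | rfl | rfl <;> tauto
      obtain ⟨c, hc⟩ := this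
      have := Finset.card_le_card hc
      simp at this
      omega
    rcases hpair with ⟨s, s'⟩ | ⟨s, s'⟩ | ⟨s, s'⟩
    · exact sep_aux h hV w0 w1 S s s' hc
    · rw [r1] at w0 w1 w2
      exact sep_aux h.rot hV w1 w2 S s s' hc
    · rw [r2] at w0 w1 w2
      exact sep_aux h.rot.rot hV w2 w0 S s s' hc

theorem chain_unique {r : ℕ → ℕ → Prop} (det : ∀ a b c, r a b → r a c → b = c) :
    ∀ (l l' : List ℕ) (a z z' : ℕ), (a :: l).IsChain r → (a :: l').IsChain r →
      (a :: l).getLast? = some z → (a :: l').getLast? = some z' →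
      (∀ b, ¬ r z b) → (∀ b, ¬ r z' b) → l = l' := by
  intro l
  induction l with
  | nil =>
    intro l' a z z' _ h2 hz _ tz _
    cases l' with
    | nil => rfl
    | cons b l' =>
      simp at hz
      subst hz
      exact absurd (List.isChain_cons_cons.1 h2).1 (tz b)
  | cons c l ih =>
    intro l' a z z' h1 h2 hz hz' tz tz'
    cases l' with
    | nil =>
      simp at hz'
      subst hz'
      exact absurd (List.isChain_cons_cons.1 h1).1 (tz' c)
    | cons b l' =>
      rw [List.isChain_cons_cons] at h1 h2
      have := det _ _ _ h1.1 h2.1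
      subst this
      rw [List.getLast?_cons_cons] at hz hz'
      rw [ih l' c z z' h1.2 h2.2 hz hz' tz tz']

theorem chain_nodup {r : ℕ → ℕ → Prop} (det : ∀ a b c, r a b → r a c → b = c) (z : ℕ)
    (tz : ∀ b, ¬ r z b) : ∀ l : List ℕ, l.IsChain r → l.getLast? = some z → l.Nodup := by
  intro l
  induction l with
  | nil => simp
  | cons a l ih =>
    intro hc hz
    rw [List.nodup_cons]
    cases l with
    | nil => simp
    | cons b l =>
      refine ⟨fun hmem => ?_, ih hc.tail (by rwa [List.getLast?_cons_cons] at hz)⟩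
      obtain ⟨u, w, huw⟩ := List.append_of_mem hmem
      rw [huw] at hc hz
      have hc2 : (a :: w).IsChain r :=
        List.IsChain.suffix hc ⟨a :: u, by simp⟩
      have hz2 : (a :: w).getLast? = some z := by
        rw [← hz, ← List.cons_append, List.getLast?_append_of_ne_nil _ (by simp)]
      have := chain_unique det _ _ _ _ _ hc hc2 hz hz2 tz tz
      have := congrArg List.length this
      simp at this
      omega

theorem chain_extend {r : ℕ → ℕ → Prop} (det : ∀ a b c, r a b → r a c → b = c)
    (A : Finset ℕ) (hA : ∀ a b, r a b → a ∈ A) (z : ℕ) (hz : z ∈ A)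
    (tz : ∀ b, ¬ r z b) : ∃ l : List ℕ, l.IsChain r ∧ (∀ a ∈ l, a ∈ A) ∧ l.getLast? = some z ∧
      ∃ h, l.head? = some h ∧ ∀ b, ¬ r b h := by
  by_contra hcon
  have key : ∀ k : ℕ, ∃ l : List ℕ, l.IsChain r ∧ (∀ a ∈ l, a ∈ A) ∧ l.getLast? = some z ∧
      l.length = k + 1 := by
    intro k
    induction k with
    | zero => exact ⟨[z], by simp, by simpa using hz, by simp, by simp⟩
    | succ k ih =>
      obtain ⟨l, h1, h2, h3, h4⟩ := ih
      cases l with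
      | nil => simp at h4
      | cons h l =>
        by_cases hb : ∃ b, r b h
        · obtain ⟨b, hb⟩ := hb
          refine ⟨b :: h :: l, List.isChain_cons_cons.2 ⟨hb, h1⟩, ?_, ?_, ?_⟩
          · intro a ha
            rcases List.mem_cons.1 ha with rfl | ha
            · exact hA _ _ hb
            · exact h2 a ha
          · rwa [List.getLast?_cons_cons]
          · simp only [List.length_cons] at h4 ⊢
            omega
        · push Not at hb
          exact absurd ⟨h :: l, h1, h2, h3, h, rfl, hb⟩ hcon
  obtain ⟨l, h1, h2, h3, h4⟩ := key A.card
  have hn := chain_nodup det z tz l h1 h3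
  have h5 : l.toFinset.card = l.length := List.toFinset_card_of_nodup hn
  have h6 : l.toFinset ⊆ A := fun a ha => h2 a (List.mem_toFinset.1 ha)
  have := Finset.card_le_card h6
  omega

theorem chain_last {r : ℕ → ℕ → Prop} (P : ℕ → Prop) (hP : ∀ a b, r a b → P a → P b) :
    ∀ (l : List ℕ) (a z : ℕ), l.IsChain r → a ∈ l → P a → l.getLast? = some z → P z := by
  intro l
  induction l with
  | nil => simp
  | cons b l ih =>
    intro a z hc ha hPa hz
    cases l with
    | nil =>
      simp at ha hz
      subst ha hz; exact hPa
    | cons c l =>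
      rw [List.isChain_cons_cons] at hc
      rw [List.getLast?_cons_cons] at hz
      rcases List.mem_cons.1 ha with rfl | ha
      · exact ih c z hc.2 (by simp) (hP _ _ hc.1 hPa) hz
      · exact ih a z hc.2 ha hPa hz

/-- The facts about relations used below. -/
structure Good (Q : QuivRel) : Prop where
  ne : Q.V.Nonempty
  hV : ∀ a ∈ Q.A, Q.src a ∈ Q.V ∧ Q.tgt a ∈ Q.V
  con : Cn Q Q.A
  relA : ∀ a b, (a, b) ∈ Q.rel → a ∈ Q.A ∧ b ∈ Q.A ∧ Q.src a = Q.tgt b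
  det : ∀ a b c, (a, b) ∈ Q.rel → (a, c) ∈ Q.rel → b = c
  codet : ∀ a b c, (b, a) ∈ Q.rel → (c, a) ∈ Q.rel → b = c

theorem IsGentle.good {Q : QuivRel} (h : IsGentle Q) : Good Q := by
  obtain ⟨h1, h2, h3, h4, -, -, -, -, h5, h6, -⟩ := h
  refine ⟨h1, h2, h3, fun a b hab => h4 _ hab, ?_, ?_⟩
  · intro a b c hb hc
    exact Finset.card_le_one.1 (h6 a (h4 _ hb).1) b (by simp [hb, (h4 _ hb).2.1]) c
      (by simp [hc, (h4 _ hc).2.1])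
  · intro a b c hb hc
    exact Finset.card_le_one.1 (h5 a (h4 _ hb).2.1) b (by simp [hb, (h4 _ hb).1]) c
      (by simp [hc, (h4 _ hc).1])

theorem rel_iff' {Q : QuivRel} (g : Good Q) (st : SigmaTau Q) (a b : ℕ) :
    (a, b) ∈ Q.rel ↔ a ∈ Q.A ∧ b ∈ Q.A ∧ Q.src a = Q.tgt b ∧ st.σ a = st.τ b := by
  constructor
  · intro h
    obtain ⟨h1, h2, h3⟩ := g.relA _ _ h
    exact ⟨h1, h2, h3, (st.rel_iff a h1 b h2 h3).1 h⟩
  · rintro ⟨h1, h2, h3, h4⟩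
    exact (st.rel_iff a h1 b h2 h3).2 h4

theorem inN_arrows {Q : QuivRel} (g : Good Q) (st : SigmaTau Q) (l : List ℕ) :
    InN Q st (.arrows l) ↔ ∃ h z, l.head? = some h ∧ l.getLast? = some z ∧
      l.IsChain (fun a b => (a, b) ∈ Q.rel) ∧ (∀ a ∈ l, a ∈ Q.A) ∧
      (∀ b, (b, h) ∉ Q.rel) ∧ (∀ b, (z, b) ∉ Q.rel) := by
  have main : ∀ h z, l.head? = some h → l.getLast? = some z → (∀ a ∈ l, a ∈ Q.A) →
      ((¬ ∃ a ∈ Q.A, Q.src a = (Thread.arrows l).target Q ∧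
          st.σ a = (Thread.arrows l).tauAnti st) ↔ ∀ b, (b, h) ∉ Q.rel) ∧
      ((¬ ∃ b ∈ Q.A, Q.tgt b = (Thread.arrows l).source Q ∧
          st.τ b = (Thread.arrows l).sigma st) ↔ ∀ b, (z, b) ∉ Q.rel) := by
    intro h z hh hz hA
    simp only [Thread.target, Thread.source, Thread.tauAnti, Thread.sigma,
      List.getLast!_of_getLast? hz, List.head!_of_head? hh]
    have hhA : h ∈ Q.A := hA h (List.mem_of_head? hh)
    have hzA : z ∈ Q.A := hA z (List.mem_of_getLast? hz)
    constructor
    · rw [not_exists]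
      refine forall_congr' fun b => not_congr ?_
      rw [rel_iff' g st]
      tauto
    · rw [not_exists]
      refine forall_congr' fun b => not_congr ?_
      rw [rel_iff' g st, eq_comm, eq_comm (a := st.τ b)]
      tauto
  constructor
  · rintro ⟨⟨hne, hA, hc⟩, h1, h2⟩
    obtain ⟨h, hh⟩ : ∃ h, l.head? = some h := by
      cases l with
      | nil => exact absurd rfl hne
      | cons a l => exact ⟨a, rfl⟩
    obtain ⟨z, hz⟩ : ∃ z, l.getLast? = some z := ⟨_, List.getLast?_eq_getLast_of_ne_nil hne⟩
    exact ⟨h, z, hh, hz, hc, hA, (main h z hh hz hA).1.1 h1, (main h z hh hz hA).2.1 h2⟩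
  · rintro ⟨h, z, hh, hz, hc, hA, h1, h2⟩
    refine ⟨⟨?_, hA, hc⟩, (main h z hh hz hA).1.2 h1, (main h z hh hz hA).2.2 h2⟩
    rintro rfl
    simp at hh

theorem inC_succ {Q : QuivRel} (g : Good Q) (st : SigmaTau Q) {a : ℕ} (ha : InC Q st a) :
    ∃ b, InC Q st b ∧ (a, b) ∈ Q.rel := by
  obtain ⟨haA, hno⟩ := ha
  have hex : ∃ b, (a, b) ∈ Q.rel := by
    by_contra hcon
    push Not at hcon
    obtain ⟨l, h1, h2, h3, h, h4, h5⟩ := chain_extend (r := fun a b => (a, b) ∈ Q.rel) g.det Q.A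
      (fun a b hab => (g.relA _ _ hab).1) a haA hcon
    exact hno ⟨l, (inN_arrows g st l).2 ⟨h, a, h4, h3, h1, h2, h5, hcon⟩,
      List.mem_of_getLast? h3⟩
  obtain ⟨b, hb⟩ := hex
  refine ⟨b, ⟨(g.relA _ _ hb).2.1, ?_⟩, hb⟩
  rintro ⟨l, hl, hbl⟩
  obtain ⟨h, z, hh, hz, hc, hA, h1, h2⟩ := (inN_arrows g st l).1 hl
  obtain ⟨u, w, huw⟩ := List.append_of_mem hbl
  rcases List.eq_nil_or_concat u with rfl | ⟨u', c, rfl⟩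
  · rw [huw] at hh
    simp at hh
    subst hh
    exact h1 a hb
  · have hc' : (c, b) ∈ Q.rel := by
      have : [c, b].IsChain (fun a b => (a, b) ∈ Q.rel) :=
        List.IsChain.infix hc ⟨u', w, by rw [huw]; simp⟩
      simpa using this
    have := g.codet _ _ _ hb hc'
    subst this
    exact hno ⟨l, hl, by rw [huw]; simp⟩

theorem psi_iff {Q : QuivRel} (g : Good Q) (st : SigmaTau Q) (a b : ℕ) :
    PsiRel Q st a b ↔ InC Q st a ∧ InC Q st b ∧ (a, b) ∈ Q.rel := by
  unfold PsiRel
  rw [rel_iff' g st]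
  constructor
  · rintro ⟨h1, h2, h3, h4⟩
    exact ⟨h1, h2, h1.1, h2.1, h3.symm, h4.symm⟩
  · rintro ⟨h1, h2, -, -, h3, h4⟩
    exact ⟨h1, h2, h3.symm, h4.symm⟩

/-- The endpoints of an arrow in `𝒞` are joined by the other arrows of its orbit. -/
theorem orbit_walk {Q : QuivRel} (g : Good Q) (st : SigmaTau Q) {a : ℕ} (ha : InC Q st a)
    (E : Finset ℕ) (hE : ∀ b, InC Q st b → Relation.EqvGen (PsiRel Q st) a b → b ≠ a → b ∈ E) :
    Wk Q E (Q.src a) (Q.tgt a) := by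
  classical
  let C := {b : ℕ // InC Q st b}
  have hfin : Finite C := Set.Finite.to_subtype
    (Set.Finite.subset (Finset.finite_toSet Q.A) (fun b (hb : InC Q st b) => hb.1))
  choose f hfC hf using fun b : C => inC_succ g st b.2
  let F : C → C := fun b => ⟨f b, hfC b⟩
  have hFinj : Function.Injective F := by
    intro b c hbc
    have : f b = f c := congrArg Subtype.val hbc
    have h1 := hf b
    rw [this] at h1
    exact Subtype.ext (g.codet _ _ _ h1 (hf c))
  let a' : C := ⟨a, ha⟩
  have hper := Function.Injective.mem_periodicPts hFinj a'
  have hpos := Function.minimalPeriod_pos_of_mem_periodicPts hper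
  have heqv : ∀ i, Relation.EqvGen (PsiRel Q st) a (F^[i] a').1 := by
    intro i
    induction i with
    | zero => exact Relation.EqvGen.refl _
    | succ i ih =>
      refine ih.trans _ _ _ (Relation.EqvGen.rel _ _ ?_)
      rw [Function.iterate_succ_apply']
      exact (psi_iff g st _ _).2 ⟨(F^[i] a').2, hfC _, hf _⟩
  have key : ∀ i, i + 1 ≤ Function.minimalPeriod F a' →
      Wk Q E (Q.src a) (Q.tgt (F^[i + 1] a').1) := by
    intro i
    induction i with
    | zero =>
      intro _
      have : Q.src a = Q.tgt (F a').1 := (g.relA _ _ (hf a')).2.2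
      simp only [zero_add, Function.iterate_one]
      rw [← this]; exact Wk.refl _
    | succ i ih =>
      intro hi
      refine (ih (by omega)).trans ?_
      have h1 : Q.src (F^[i + 1] a').1 = Q.tgt (F^[i + 1 + 1] a').1 := by
        rw [Function.iterate_succ_apply' F (i + 1)]
        exact (g.relA _ _ (hf _)).2.2
      rw [← h1]
      refine (Wk.arrow (hE _ (F^[i + 1] a').2 (heqv _) ?_)).symm
      intro heq
      have hp : Function.IsPeriodicPt F (i + 1) a' := Subtype.ext heq
      have := hp.minimalPeriod_le (by omega)
      omega
  have := key (Function.minimalPeriod F a' - 1) (by omega)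
  rw [Nat.sub_add_cancel hpos, Function.iterate_minimalPeriod] at this
  exact this

theorem triangle_inC {Q : QuivRel} (g : Good Q) (st : SigmaTau Q) {a0 a1 a2 : ℕ}
    (h : IsTriangleTriple Q a0 a1 a2) : InC Q st a0 := by
  obtain ⟨⟨m0, -⟩, r0, r1, r2⟩ := h
  refine ⟨m0, ?_⟩
  rintro ⟨l, hl, hal⟩
  obtain ⟨h, z, hh, hz, hc, hA, h1, h2⟩ := (inN_arrows g st l).1 hl
  have := chain_last (fun b => b = a0 ∨ b = a1 ∨ b = a2) (by
    rintro a b hab (rfl | rfl | rfl)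
    · exact Or.inr (Or.inl (g.det _ _ _ hab r0))
    · exact Or.inr (Or.inr (g.det _ _ _ hab r1))
    · exact Or.inl (g.det _ _ _ hab r2)) l a0 z hc hal (Or.inl rfl) hz
  rcases this with rfl | rfl | rfl
  · exact h2 _ r0
  · exact h2 _ r1
  · exact h2 _ r2

theorem triangle_orbit {Q : QuivRel} (g : Good Q) (st : SigmaTau Q) {a0 a1 a2 : ℕ}
    (h : IsTriangleTriple Q a0 a1 a2) (b : ℕ) :
    Relation.EqvGen (PsiRel Q st) a0 b ↔ b = a0 ∨ b = a1 ∨ b = a2 := by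
  have c0 := triangle_inC g st h
  have c1 := triangle_inC g st h.rot
  have c2 := triangle_inC g st h.rot.rot
  obtain ⟨-, r0, r1, r2⟩ := h
  constructor
  · intro hb
    have key : ∀ x y, Relation.EqvGen (PsiRel Q st) x y →
        ((x = a0 ∨ x = a1 ∨ x = a2) ↔ (y = a0 ∨ y = a1 ∨ y = a2)) := by
      intro x y hxy
      induction hxy with
      | rel x y hxy =>
        obtain ⟨-, -, hr⟩ := (psi_iff g st _ _).1 hxy
        constructor
        · rintro (rfl | rfl | rfl)
          · exact Or.inr (Or.inl (g.det _ _ _ hr r0))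
          · exact Or.inr (Or.inr (g.det _ _ _ hr r1))
          · exact Or.inl (g.det _ _ _ hr r2)
        · rintro (rfl | rfl | rfl)
          · exact Or.inr (Or.inr (g.codet _ _ _ hr r2))
          · exact Or.inl (g.codet _ _ _ hr r0)
          · exact Or.inr (Or.inl (g.codet _ _ _ hr r1))
      | refl => rfl
      | symm _ _ _ ih => exact ih.symm
      | trans _ _ _ _ _ ih ih' => exact ih.trans ih'
    exact (key _ _ hb).1 (Or.inl rfl)
  · have e1 : Relation.EqvGen (PsiRel Q st) a0 a1 :=
      Relation.EqvGen.rel _ _ ((psi_iff g st _ _).2 ⟨c0, c1, r0⟩)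
    have e2 : Relation.EqvGen (PsiRel Q st) a1 a2 :=
      Relation.EqvGen.rel _ _ ((psi_iff g st _ _).2 ⟨c1, c2, r1⟩)
    rintro (rfl | rfl | rfl)
    · exact Relation.EqvGen.refl _
    · exact e1
    · exact e1.trans _ _ _ e2

/-- Class of `w` under the equivalence generated by `r`. -/
def cls {α : Type} (r : α → α → Prop) (w : α) : Set α := {w' | Relation.EqvGen r w w'}

theorem cls_eq_iff {α : Type} (r : α → α → Prop) (w w' : α) :
    cls r w' = cls r w ↔ Relation.EqvGen r w w' := by
  constructor
  · intro h
    have : w' ∈ cls r w' := Relation.EqvGen.refl _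
    rw [h] at this
    exact this
  · intro h
    ext x
    exact ⟨fun hx => h.trans _ _ _ hx, fun hx => (h.symm _ _).trans _ _ _ hx⟩

open Classical in
theorem cls_eq {α : Type} (S : Finset α) (r : α → α → Prop)
    (hr : ∀ a b, r a b → a ∈ S ∧ b ∈ S) {w : α} (hw : w ∈ S) :
    cls r w = ↑(S.filter fun x => cls r x = cls r w) := by
  have key : ∀ x y, Relation.EqvGen r x y → (x ∈ S ↔ y ∈ S) := by
    intro x y h
    induction h with
    | rel x y h => exact ⟨fun _ => (hr _ _ h).2, fun _ => (hr _ _ h).1⟩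
    | refl => rfl
    | symm _ _ _ ih => exact ih.symm
    | trans _ _ _ _ _ ih ih' => exact ih.trans ih'
  ext x
  rw [Finset.mem_coe, Finset.mem_filter, cls_eq_iff]
  exact ⟨fun h => ⟨(key _ _ h).1 hw, h⟩, fun h => h.2⟩

open Classical in
theorem sum_orbits {α : Type} (S : Finset α) (r : α → α → Prop)
    (hr : ∀ a b, r a b → a ∈ S ∧ b ∈ S) (f : α → ℕ) :
    ∑ O ∈ S.image (cls r), ∑ᶠ w ∈ O, f w = ∑ x ∈ S, f x := by
  rw [← Finset.sum_fiberwise_of_maps_to (g := cls r) (t := S.image (cls r))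
    (fun x hx => Finset.mem_image_of_mem _ hx)]
  refine Finset.sum_congr rfl fun O hO => ?_
  obtain ⟨w, hw, rfl⟩ := Finset.mem_image.1 hO
  have h := cls_eq S r hr hw
  calc ∑ᶠ x ∈ cls r w, f x
      = ∑ᶠ x ∈ (↑(S.filter fun x => cls r x = cls r w) : Set α), f x := by rw [← h]
    _ = _ := finsum_mem_coe_finset _ _

open Classical in
theorem sum_ncard {α : Type} (S : Finset α) (r : α → α → Prop)
    (hr : ∀ a b, r a b → a ∈ S ∧ b ∈ S) :
    ∑ O ∈ S.image (cls r), O.ncard = S.card := by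
  rw [Finset.card_eq_sum_card_fiberwise (f := cls r) (t := S.image (cls r))
    (fun x hx => Finset.mem_image_of_mem _ hx)]
  refine Finset.sum_congr rfl fun O hO => ?_
  obtain ⟨w, hw, rfl⟩ := Finset.mem_image.1 hO
  have h := cls_eq S r hr hw
  calc (cls r w).ncard
      = (↑(S.filter fun x => cls r x = cls r w) : Set α).ncard := by rw [← h]
    _ = _ := Set.ncard_coe_finset _

theorem ncard_pos_of_orbit {α : Type} (S : Finset α) (r : α → α → Prop)
    (hr : ∀ a b, r a b → a ∈ S ∧ b ∈ S) {w : α} (hw : w ∈ S) : 0 < (cls r w).ncard := by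
  classical
  have h := cls_eq S r hr hw
  have hf : (cls r w).Finite := by rw [h]; exact Finset.finite_toSet _
  rw [Set.ncard_pos hf]
  exact ⟨w, Relation.EqvGen.refl _⟩

/-- Two maximal antipaths with the same source data coincide. -/
theorem inN_inj {Q : QuivRel} (g : Good Q) (st : SigmaTau Q) {w w' : Thread}
    (hw : InN Q st w) (hw' : InN Q st w') (hs : w.source Q = w'.source Q)
    (hσ : w.sigma st = w'.sigma st) : w = w' := by
  have mixed : ∀ (x : ℕ) (ε : ℤ) (l : List ℕ), InN Q st (.triv x ε) → InN Q st (.arrows l) →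
      (Thread.triv x ε).source Q = (Thread.arrows l).source Q →
      (Thread.triv x ε).sigma st = (Thread.arrows l).sigma st → False := by
    intro x ε l h1 h2 h3 h4
    obtain ⟨h, z, hh, hz, hc, hA, -, -⟩ := (inN_arrows g st l).1 h2
    simp only [Thread.source, Thread.sigma, List.getLast!_of_getLast? hz] at h3 h4
    exact h1.2.1 ⟨z, hA z (List.mem_of_getLast? hz), h3.symm, h4.symm⟩
  cases w with
  | triv x ε =>
    cases w' with
    | triv x' ε' =>
      simp only [Thread.source, Thread.sigma] at hs hσ
      rw [hs, hσ]
    | arrows l => exact (mixed _ _ _ hw hw' hs hσ).elim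
  | arrows l =>
    cases w' with
    | triv x ε => exact (mixed _ _ _ hw' hw hs.symm hσ.symm).elim
    | arrows l' =>
      obtain ⟨h, z, hh, hz, hc, hA, h1, -⟩ := (inN_arrows g st l).1 hw
      obtain ⟨h', z', hh', hz', hc', hA', h1', -⟩ := (inN_arrows g st l').1 hw'
      simp only [Thread.source, Thread.sigma, List.getLast!_of_getLast? hz,
        List.getLast!_of_getLast? hz'] at hs hσ
      have hzA := hA z (List.mem_of_getLast? hz)
      have hzA' := hA' z' (List.mem_of_getLast? hz')
      have hzz : z = z' := by
        by_contra hne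
        have h1 := st.σ_src z hzA z' hzA' hne hs
        have h2 := st.σ_pm z hzA
        omega
      subst hzz
      have hr : ∀ (l : List ℕ) (h z : ℕ), l.head? = some h → l.getLast? = some z →
          l.IsChain (fun a b => (a, b) ∈ Q.rel) →
          ∃ m, l.reverse = z :: m ∧ (z :: m).IsChain (fun a b => (b, a) ∈ Q.rel) ∧
            (z :: m).getLast? = some h := by
        intro l h z hh hz hc
        have e1 : l.reverse.head? = some z := by simpa using hz
        have e2 : l.reverse.getLast? = some h := by simpa using hh
        cases hl : l.reverse with
        | nil => rw [hl] at e1; simp at e1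
        | cons y m =>
          rw [hl] at e1 e2
          simp only [List.head?_cons, Option.some.injEq] at e1
          subst e1
          refine ⟨m, rfl, ?_, e2⟩
          rw [← hl, List.isChain_reverse]
          exact hc
      obtain ⟨m, e, c, la⟩ := hr l h z hh hz hc
      obtain ⟨m', e', c', la'⟩ := hr l' h' z hh' hz' hc'
      have := chain_unique (r := fun a b => (b, a) ∈ Q.rel) g.codet m m' z h h' c c' la la' h1 h1'
      subst this
      rw [← e'] at e
      rw [List.reverse_injective e]

theorem inN_mem {Q : QuivRel} (g : Good Q) (st : SigmaTau Q) {w : Thread}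
    (hw : InN Q st w) : w.source Q ∈ Q.V ∧ (w.sigma st = 1 ∨ w.sigma st = -1) := by
  cases w with
  | triv x ε => exact hw.1
  | arrows l =>
    obtain ⟨h, z, hh, hz, hc, hA, -, -⟩ := (inN_arrows g st l).1 hw
    simp only [Thread.source, Thread.sigma, List.getLast!_of_getLast? hz]
    have hzA := hA z (List.mem_of_getLast? hz)
    exact ⟨(g.hV z hzA).1, st.σ_pm z hzA⟩

theorem inN_finite {Q : QuivRel} (g : Good Q) (st : SigmaTau Q) : {w | InN Q st w}.Finite := by
  refine Set.Finite.of_finite_image (f := fun w => (w.source Q, w.sigma st)) ?_ ?_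
  · refine Set.Finite.subset (Finset.finite_toSet (Q.V ×ˢ ({1, -1} : Finset ℤ))) ?_
    rintro _ ⟨w, hw, rfl⟩
    have := inN_mem g st hw
    simpa using this
  · intro w hw w' hw' h
    simp only [Prod.mk.injEq] at h
    exact inN_inj g st hw hw' h.1 h.2

theorem inN_card {Q : QuivRel} (g : Good Q) (st : SigmaTau Q) (N : Finset Thread)
    (hN : ∀ w, w ∈ N ↔ InN Q st w) : N.card + Q.A.card ≤ 2 * Q.V.card := by
  classical
  have h1 : (N.image fun w => (w.source Q, w.sigma st)).card = N.card := by
    refine Finset.card_image_of_injOn ?_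
    intro w hw w' hw' h
    simp only [Prod.mk.injEq] at h
    exact inN_inj g st ((hN w).1 hw) ((hN w').1 hw') h.1 h.2
  have h2 : (Q.A.image fun a => (Q.tgt a, st.τ a)).card = Q.A.card := by
    refine Finset.card_image_of_injOn ?_
    intro a ha b hb h
    simp only [Prod.mk.injEq] at h
    by_contra hne
    have h1 := st.τ_tgt a ha b hb hne h.1
    have h2 := st.τ_pm a ha
    omega
  have h3 : Disjoint (N.image fun w => (w.source Q, w.sigma st))
      (Q.A.image fun a => (Q.tgt a, st.τ a)) := by
    rw [Finset.disjoint_left]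
    intro x hx hx'
    obtain ⟨w, hw, rfl⟩ := Finset.mem_image.1 hx
    obtain ⟨a, ha, h⟩ := Finset.mem_image.1 hx'
    simp only [Prod.mk.injEq] at h
    exact ((hN w).1 hw).2.2 ⟨a, ha, h.1, h.2⟩
  have h4 : (N.image fun w => (w.source Q, w.sigma st)) ∪
      (Q.A.image fun a => (Q.tgt a, st.τ a)) ⊆ Q.V ×ˢ ({1, -1} : Finset ℤ) := by
    intro x hx
    rcases Finset.mem_union.1 hx with hx | hx
    · obtain ⟨w, hw, rfl⟩ := Finset.mem_image.1 hx
      have := inN_mem g st ((hN w).1 hw)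
      simpa using this
    · obtain ⟨a, ha, rfl⟩ := Finset.mem_image.1 hx
      have := st.τ_pm a ha
      simpa using ⟨(g.hV a ha).2, this⟩
  have h5 := Finset.card_le_card h4
  rw [Finset.card_union_of_disjoint h3, h1, h2, Finset.card_product] at h5
  have h6 : ({1, -1} : Finset ℤ).card = 2 := by decide
  rw [h6] at h5
  omega

theorem arrows_card {Q : QuivRel} (st : SigmaTau Q) (N : Finset Thread)
    (hN : ∀ w, w ∈ N ↔ InN Q st w) (C : Finset ℕ) (hC : ∀ a, a ∈ C ↔ InC Q st a) :
    Q.A.card ≤ ∑ w ∈ N, w.len + C.card := by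
  classical
  let T : Thread → Finset ℕ := fun w => match w with
    | .triv _ _ => ∅
    | .arrows l => l.toFinset
  have hsub : Q.A ⊆ N.biUnion T ∪ C := by
    intro a ha
    by_cases hc : InC Q st a
    · exact Finset.mem_union_right _ ((hC a).2 hc)
    · refine Finset.mem_union_left _ ?_
      have : ∃ l : List ℕ, InN Q st (.arrows l) ∧ a ∈ l := by
        by_contra h
        exact hc ⟨ha, h⟩
      obtain ⟨l, hl, hal⟩ := this
      exact Finset.mem_biUnion.2 ⟨.arrows l, (hN _).2 hl, List.mem_toFinset.2 hal⟩
  have h1 := Finset.card_le_card hsub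
  have h2 := Finset.card_union_le (N.biUnion T) C
  have h3 : (N.biUnion T).card ≤ ∑ w ∈ N, (T w).card := Finset.card_biUnion_le
  have h4 : ∑ w ∈ N, (T w).card ≤ ∑ w ∈ N, w.len := by
    refine Finset.sum_le_sum fun w _ => ?_
    cases w with
    | triv x ε => simp [T]
    | arrows l => exact List.toFinset_card_le l
  omega

open Classical in
/-- The fundamental count: `|A| ≤ |V| + (number of orbits in 𝒞)`. -/
theorem count {Q : QuivRel} (st : SigmaTau Q) (hA : ClassAtilde Q st) (C : Finset ℕ)
    (hC : ∀ a, a ∈ C ↔ InC Q st a) :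
    Q.A.card ≤ Q.V.card + (C.image (cls (PsiRel Q st))).card := by
  obtain ⟨hg, m1, m2, p, q, hp, hq, hf⟩ := hA
  have g := hg.good
  let N : Finset Thread := (inN_finite g st).toFinset
  have hN : ∀ w, w ∈ N ↔ InN Q st w := fun w => by simp [N]
  have hrN : ∀ a b, PhiRel Q st a b → a ∈ N ∧ b ∈ N :=
    fun a b h => ⟨(hN a).2 h.1, (hN b).2 h.2.1⟩
  have hrC : ∀ a b, PsiRel Q st a b → a ∈ C ∧ b ∈ C :=
    fun a b h => ⟨(hC a).2 h.1, (hC b).2 h.2.1⟩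
  let NO := N.image (cls (PhiRel Q st))
  let CO := C.image (cls (PsiRel Q st))
  have hNO : ∀ O, O ∈ NO ↔ NOrbit Q st O := by
    intro O
    simp only [NO, Finset.mem_image, NOrbit]
    exact ⟨fun ⟨w, hw, h⟩ => ⟨w, (hN w).1 hw, h.symm⟩, fun ⟨w, hw, h⟩ => ⟨w, (hN w).2 hw, h.symm⟩⟩
  have hCO : ∀ O, O ∈ CO ↔ COrbit Q st O := by
    intro O
    simp only [CO, Finset.mem_image, COrbit]
    exact ⟨fun ⟨w, hw, h⟩ => ⟨w, (hC w).1 hw, h.symm⟩, fun ⟨w, hw, h⟩ => ⟨w, (hC w).2 hw, h.symm⟩⟩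
  have hpos : ∀ O ∈ NO, 0 < pN O := by
    intro O hO
    obtain ⟨w, hw, rfl⟩ := Finset.mem_image.1 hO
    exact ncard_pos_of_orbit N _ hrN hw
  have hfval : ∀ x y, fInv Q st (x, y) = (NO.filter fun O => (pN O, qN O) = (x, y)).card +
      (CO.filter fun O => x = 0 ∧ O.ncard = y).card := by
    intro x y
    unfold fInv
    congr 1
    · rw [← Set.ncard_coe_finset]
      congr 1
      ext O
      simp [hNO]
    · rw [← Set.ncard_coe_finset]
      congr 1
      ext O
      simp [hCO]
  -- orbits in 𝒞
  have hC3 : ∀ O ∈ CO, O.ncard = 3 := by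
    intro O hO
    by_contra hne
    have h1 := hfval 0 O.ncard
    rw [hf] at h1
    have h2 : 0 < (CO.filter fun O' => 0 = 0 ∧ O'.ncard = O.ncard).card :=
      Finset.card_pos.2 ⟨O, by simp [hO]⟩
    have e1 : charFn 0 3 (0, O.ncard) = 0 := by simp [charFn, hne]
    have e2 : charFn (p + m1) p (0, O.ncard) = 0 := by
      simp only [charFn, Prod.mk.injEq, ite_eq_right_iff]; omega
    have e3 : charFn (q + m2) q (0, O.ncard) = 0 := by
      simp only [charFn, Prod.mk.injEq, ite_eq_right_iff]; omega
    rw [e1, e2, e3] at h1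
    omega
  have hCcard : C.card = 3 * CO.card := by
    rw [← sum_ncard C _ hrC, Finset.sum_congr rfl hC3]
    simp [CO, mul_comm]
  have hCm : CO.card ≤ m1 + m2 := by
    have h1 := hfval 0 3
    rw [hf] at h1
    have e1 : charFn 0 3 (0, 3) = 1 := by simp [charFn]
    have e2 : charFn (p + m1) p (0, 3) = 0 := by
      simp only [charFn, Prod.mk.injEq, ite_eq_right_iff]; omega
    have e3 : charFn (q + m2) q (0, 3) = 0 := by
      simp only [charFn, Prod.mk.injEq, ite_eq_right_iff]; omega
    have h2 : (CO.filter fun O => 0 = 0 ∧ O.ncard = 3) = CO :=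
      Finset.filter_true_of_mem fun O hO => ⟨rfl, hC3 O hO⟩
    rw [e1, e2, e3, h2] at h1
    omega
  -- orbits in 𝒩
  let D : Finset (ℕ × ℕ) := {(p + m1, p), (q + m2, q)}
  have hval : ∀ x y, 0 < x → (NO.filter fun O => (pN O, qN O) = (x, y)).card =
      charFn (p + m1) p (x, y) + charFn (q + m2) q (x, y) := by
    intro x y hx
    have h1 := hfval x y
    rw [hf] at h1
    have e1 : charFn 0 3 (x, y) = 0 := by
      simp only [charFn, Prod.mk.injEq, ite_eq_right_iff]; omega
    have h2 : (CO.filter fun O => x = 0 ∧ O.ncard = y) = ∅ :=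
      Finset.filter_false_of_mem fun O hO h => by omega
    rw [e1, h2, Finset.card_empty] at h1
    omega
  have hmaps : ∀ O ∈ NO, (pN O, qN O) ∈ D := by
    intro O hO
    have h1 := hval (pN O) (qN O) (hpos O hO)
    have h2 : 0 < (NO.filter fun O' => (pN O', qN O') = (pN O, qN O)).card :=
      Finset.card_pos.2 ⟨O, by simp [hO]⟩
    by_contra hD
    simp only [D, Finset.mem_insert, Finset.mem_singleton, not_or] at hD
    have e2 : charFn (p + m1) p (pN O, qN O) = 0 := by
      simp only [charFn, if_neg hD.1]
    have e3 : charFn (q + m2) q (pN O, qN O) = 0 := by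
      simp only [charFn, if_neg hD.2]
    omega
  have hsum : ∀ G : ℕ × ℕ → ℕ, ∑ O ∈ NO, G (pN O, qN O) = G (p + m1, p) + G (q + m2, q) := by
    intro G
    rw [← Finset.sum_fiberwise_of_maps_to (g := fun O => (pN O, qN O)) hmaps]
    have hD0 : ∀ d ∈ D, 0 < d.1 := by
      intro d hd
      simp only [D, Finset.mem_insert, Finset.mem_singleton] at hd
      rcases hd with rfl | rfl
      · exact hp
      · exact hq
    have : ∀ d ∈ D, ∑ O ∈ NO with (pN O, qN O) = d, G (pN O, qN O) =
        (charFn (p + m1) p d + charFn (q + m2) q d) * G d := by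
      intro d hd
      rw [← hval d.1 d.2 (hD0 d hd), Finset.card_eq_sum_ones, Finset.sum_mul]
      refine Finset.sum_congr rfl fun O hO => ?_
      rw [(Finset.mem_filter.1 hO).2, one_mul]
    rw [Finset.sum_congr rfl this]
    simp only [add_mul, Finset.sum_add_distrib, charFn, ite_mul, one_mul, zero_mul,
      Finset.sum_ite_eq']
    simp [D]
  have hP : ∑ O ∈ NO, pN O = N.card := sum_ncard N _ hrN
  have hS : ∑ O ∈ NO, qN O = ∑ w ∈ N, w.len := sum_orbits N _ hrN _
  rw [hsum (fun d => d.1)] at hP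
  rw [hsum (fun d => d.2)] at hS
  have k1 := inN_card g st N hN
  have k2 := arrows_card st N hN C hC
  simp only at hP hS
  change _ ≤ _ + CO.card
  omega

theorem not_con {Q : QuivRel} (st : SigmaTau Q) (hA : ClassAtilde Q st) {a0 a1 a2 : ℕ}
    (h : IsTriangleTriple Q a0 a1 a2) : ¬ Cn Q (Q.A \ {a0, a1, a2}) := by
  classical
  intro hcon
  have g := hA.1.good
  let C : Finset ℕ := Q.A.filter fun a => InC Q st a
  have hC : ∀ a, a ∈ C ↔ InC Q st a := fun a => by
    simp only [C, Finset.mem_filter]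
    exact ⟨fun h => h.2, fun h => ⟨h.1, h⟩⟩
  have hcount := count st hA C hC
  let CO := C.image (cls (PsiRel Q st))
  let O0 : Set ℕ := cls (PsiRel Q st) a0
  have c0 := triangle_inC g st h
  have hO0 : O0 ∈ CO := Finset.mem_image_of_mem _ ((hC a0).2 c0)
  have hrep : ∀ O ∈ CO, ∃ a, a ∈ C ∧ cls (PsiRel Q st) a = O := fun O hO => by
    obtain ⟨a, ha, h⟩ := Finset.mem_image.1 hO
    exact ⟨a, ha, h⟩
  choose! rep hrepC hrepcls using hrep
  let X : Finset ℕ := (CO.erase O0).image rep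
  have hX : ∀ x ∈ X, InC Q st x ∧ cls (PsiRel Q st) x ≠ O0 ∧ rep (cls (PsiRel Q st) x) = x := by
    intro x hx
    obtain ⟨O, hO, rfl⟩ := Finset.mem_image.1 hx
    rw [Finset.mem_erase] at hO
    rw [hrepcls O hO.2]
    exact ⟨(hC _).1 (hrepC O hO.2), hO.1, rfl⟩
  have hXcard : X.card = CO.card - 1 := by
    rw [← Finset.card_erase_of_mem hO0]
    refine Finset.card_image_of_injOn ?_
    intro O hO O' hO' he
    rw [← hrepcls O (Finset.mem_of_mem_erase hO), ← hrepcls O' (Finset.mem_of_mem_erase hO'), he]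
  have hXdisj : Disjoint ({a0, a1, a2} : Finset ℕ) X := by
    rw [Finset.disjoint_left]
    intro x hx hxX
    refine (hX x hxX).2.1 ?_
    rw [cls_eq_iff, triangle_orbit g st h]
    simpa using hx
  have hcon2 : Cn Q ((Q.A \ {a0, a1, a2}) \ X) := by
    intro x hx y hy
    refine Wk.lift ?_ (hcon x hx y hy)
    intro b hb
    by_cases hbX : b ∈ X
    · obtain ⟨h1, h2, h3⟩ := hX b hbX
      refine orbit_walk g st h1 _ ?_
      intro c hc hbc hne
      have hcls := (cls_eq_iff (PsiRel Q st) b c).2 hbc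
      rw [Finset.mem_sdiff, Finset.mem_sdiff]
      refine ⟨⟨hc.1, fun hcO => ?_⟩, fun hcX => ?_⟩
      · apply h2
        rw [← hcls, cls_eq_iff, triangle_orbit g st h]
        simpa using hcO
      · have := (hX c hcX).2.2
        rw [hcls, h3] at this
        exact hne this.symm
    · exact Wk.arrow (Finset.mem_sdiff.2 ⟨hb, hbX⟩)
  have hle := Cn.card_le g.ne (fun a ha => g.hV a (by
    simp only [Finset.mem_sdiff] at ha; exact ha.1.1)) hcon2
  obtain ⟨⟨m0, m1, m2, n01, n12, n02, -⟩, -⟩ := h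
  have h3 : ({a0, a1, a2} : Finset ℕ).card = 3 := Finset.card_eq_three.2 ⟨a0, a1, a2, n01, n02, n12, rfl⟩
  have hXA : {a0, a1, a2} ∪ X ⊆ Q.A := by
    intro x hx
    rcases Finset.mem_union.1 hx with hx | hx
    · simp only [Finset.mem_insert, Finset.mem_singleton] at hx
      rcases hx with rfl | rfl | rfl <;> assumption
    · exact (hX x hx).1.1
  rw [sdiff_sdiff, Finset.sup_eq_union, Finset.card_sdiff_of_subset hXA,
    Finset.card_union_of_disjoint hXdisj, h3, hXcard] at hle
  have hpos : 0 < CO.card := Finset.card_pos.2 ⟨O0, hO0⟩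
  have hle2 := Finset.card_le_card hXA
  rw [Finset.card_union_of_disjoint hXdisj, h3, hXcard] at hle2
  change _ ≤ _ + CO.card at hcount
  omega

/-- Let `𝚫 ∈ Ã` have no branch arrows and no branch
triangles.  Then each triangle `𝒪` contains a unique arrow `γ_𝒪` such that
`Δ ∖ {γ_𝒪}` has no branch arrows. -/
theorem stmt16 (Q : QuivRel) (st : SigmaTau Q) (hA : ClassAtilde Q st)
    (hba : ∀ a : ℕ, ¬ BranchArrow Q a)
    (hbt : ∀ O : Finset ℕ, ¬ BranchTriangle Q O) :
    ∀ O : Finset ℕ, TriangleSet Q O →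
      ∃! g : ℕ, g ∈ O ∧ ∀ a : ℕ, ¬ BranchArrow (deleteArrows Q {g}) a := by
  rintro O ⟨a0, a1, a2, rfl, h⟩
  have g := hA.1.good
  refine core h g.con ?_ g.hV (not_con st hA h) ?_
  · intro a ha
    by_contra hc
    exact hba a ⟨ha, hc⟩
  · by_contra hcon
    push Not at hcon
    exact hbt {a0, a1, a2} ⟨⟨a0, a1, a2, rfl, h⟩, hcon⟩

end GentleQuiv
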